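/- Let m ≥ 10 and a ∈ [ √(2 log 2)/m, 1 ]. Let ν(x) = (2π)^{−1/2} e^{−x²/2}, and π(x) = (1 − e^{−a²m²/2}) g_m(x) + e^{−a²m²/2} u_m(x), where g_m(x) = (2π)^{−1/2} e^{−(x−m)²/2} and u_m(x) = e^{−d(x,[−m,2m])²/2} / (3m + √(2π)). Then for every λ ∈ [0,1], the geometric-mean normalization satisfies e^{−λ a² m²/2} / (10 m) ≤ ∫_ℝ ν(x)^{1−λ} π(x)^λ dx ≤ 4 ( e^{−λ a² m²/2} + e^{−λ(1−λ) m²/2} ); equivalently, the normalizing constant c_λ = (∫ ν^{1−λ} π^λ dx)^{−1} satisfies 1/( 4( e^{−λ a² m²/2} + e^{−λ(1−λ)m²/2} ) ) ≤ c_λ ≤ 10 m · e^{λ a² m²/2}. -/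

import Mathlib

open MeasureTheory Real

/-- The standard Gaussian density on ℝ. -/
noncomputable def stdGauss (x : ℝ) : ℝ := Real.exp (-x ^ 2 / 2) / Real.sqrt (2 * Real.pi)

/-- The density of N(m, 1). -/
noncomputable def gaussAt (m x : ℝ) : ℝ := Real.exp (-(x - m) ^ 2 / 2) / Real.sqrt (2 * Real.pi)

/-- The smoothed uniform density on [−m, 2m]. -/
noncomputable def smUnif (m x : ℝ) : ℝ :=
  Real.exp (-(Metric.infDist x (Set.Icc (-m) (2 * m))) ^ 2 / 2) / (3 * m + Real.sqrt (2 * Real.pi))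

/-- The general unimodal target π = (1 − e^{−a²m²/2}) N(m,1) + e^{−a²m²/2} u_m. -/
noncomputable def piDensA (m a x : ℝ) : ℝ :=
  (1 - Real.exp (-(a ^ 2 * m ^ 2) / 2)) * gaussAt m x
    + Real.exp (-(a ^ 2 * m ^ 2) / 2) * smUnif m x

theorem gs_aux (c : ℝ) : Integrable (fun x : ℝ => Real.exp (-(x - c) ^ 2 / 2)) ∧
    ∫ x : ℝ, Real.exp (-(x - c) ^ 2 / 2) = Real.sqrt (2 * Real.pi) := by
  have h1 : (fun x : ℝ => Real.exp (-(x - c) ^ 2 / 2))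
      = fun x => (fun y : ℝ => Real.exp (-(1 / 2) * y ^ 2)) (x - c) := by
    funext x
    simp only
    congr 1
    ring
  rw [h1]
  refine ⟨(integrable_exp_neg_mul_sq (by norm_num)).comp_sub_right c, ?_⟩
  rw [integral_sub_right_eq_self (fun y : ℝ => Real.exp (-(1 / 2) * y ^ 2)) c, integral_gaussian]
  congr 1
  field_simp

theorem gaussAt_aux (c : ℝ) : Integrable (gaussAt c) ∧ ∫ x, gaussAt c x = 1 := by
  have h := gs_aux c
  have hs : 0 < Real.sqrt (2 * Real.pi) := by positivity
  unfold gaussAt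
  refine ⟨h.1.div_const _, ?_⟩
  rw [integral_div, h.2, div_self hs.ne']

theorem mix_aux (m x l : ℝ) :
    (stdGauss x) ^ (1 - l) * (gaussAt m x) ^ l
      = Real.exp (-(l * (1 - l) * m ^ 2) / 2) * gaussAt (l * m) x := by
  have hs : 0 < Real.sqrt (2 * Real.pi) := by positivity
  unfold stdGauss gaussAt
  rw [Real.div_rpow (Real.exp_pos _).le hs.le, Real.div_rpow (Real.exp_pos _).le hs.le,
    ← Real.exp_mul, ← Real.exp_mul, div_mul_div_comm, ← Real.exp_add, ← Real.rpow_add hs,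
    mul_div_assoc', ← Real.exp_add]
  simp only [sub_add_cancel, Real.rpow_one]
  congr 2
  ring

theorem smUnif_cont (m : ℝ) : Continuous (smUnif m) := by
  unfold smUnif
  have := Metric.continuous_infDist_pt (Set.Icc (-m) (2 * m))
  fun_prop

theorem smUnif_pos (m x : ℝ) (hm : 10 ≤ m) : 0 < smUnif m x := by
  unfold smUnif
  positivity

theorem smUnif_aux (m : ℝ) (hm : 10 ≤ m) : Integrable (smUnif m) ∧ ∫ x, smUnif m x ≤ 2 := by
  set I := Set.Icc (-m) (2 * m) with hI
  have hs : 0 < Real.sqrt (2 * Real.pi) := by positivity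
  have hD : 0 < 3 * m + Real.sqrt (2 * Real.pi) := by positivity
  have hne : I.Nonempty := ⟨0, by constructor <;> linarith⟩
  have h1 := gs_aux (-m)
  have h2 := gs_aux (2 * m)
  have hi : Integrable (I.indicator (fun _ : ℝ => (1 : ℝ))) := by
    rw [integrable_indicator_iff measurableSet_Icc]
    exact integrableOn_const (by simp)
  have hsum := (hi.add h1.1).add h2.1
  have hB := hsum.div_const (3 * m + Real.sqrt (2 * Real.pi))
  have hle : ∀ x, smUnif m x ≤ ((I.indicator (fun _ : ℝ => (1 : ℝ)) x
      + Real.exp (-(x - -m) ^ 2 / 2)) + Real.exp (-(x - 2 * m) ^ 2 / 2))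
        / (3 * m + Real.sqrt (2 * Real.pi)) := by
    intro x
    unfold smUnif
    apply div_le_div_of_nonneg_right _ hD.le
    have e1 := Real.exp_pos (-(x - -m) ^ 2 / 2)
    have e2 := Real.exp_pos (-(x - 2 * m) ^ 2 / 2)
    by_cases hx : x ∈ I
    · rw [Set.indicator_of_mem hx, Metric.infDist_zero_of_mem hx]
      have e3 : Real.exp (-(0 : ℝ) ^ 2 / 2) = 1 := by norm_num
      rw [e3]
      linarith
    · rw [Set.indicator_of_notMem hx]
      rcases lt_or_ge x (-m) with h | h
      · have hd : -m - x ≤ Metric.infDist x I := by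
          rw [Metric.le_infDist hne]
          intro y hy
          rw [Real.dist_eq, abs_sub_comm]
          exact le_trans (by linarith [hy.1]) (le_abs_self _)
        have : Real.exp (-(Metric.infDist x I) ^ 2 / 2) ≤ Real.exp (-(x - -m) ^ 2 / 2) := by
          apply Real.exp_le_exp.2
          nlinarith
        linarith
      · have h' : 2 * m < x := by
          by_contra hc
          exact hx ⟨h, by linarith⟩
        have hd : x - 2 * m ≤ Metric.infDist x I := by
          rw [Metric.le_infDist hne]
          intro y hy
          rw [Real.dist_eq]
          exact le_trans (by linarith [hy.2]) (le_abs_self _)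
        have : Real.exp (-(Metric.infDist x I) ^ 2 / 2) ≤ Real.exp (-(x - 2 * m) ^ 2 / 2) := by
          apply Real.exp_le_exp.2
          nlinarith
        linarith
  have hint : Integrable (smUnif m) := by
    refine hB.mono' (smUnif_cont m).aestronglyMeasurable (ae_of_all _ fun x => ?_)
    rw [Real.norm_of_nonneg (smUnif_pos m x hm).le]
    exact hle x
  refine ⟨hint, (integral_mono hint hB hle).trans ?_⟩
  rw [integral_div, div_le_iff₀ hD]
  have ea : ∫ x, ((I.indicator (fun _ : ℝ => (1 : ℝ)) + fun x => Real.exp (-(x - -m) ^ 2 / 2))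
      + fun x => Real.exp (-(x - 2 * m) ^ 2 / 2)) x
      = 3 * m + Real.sqrt (2 * Real.pi) + Real.sqrt (2 * Real.pi) := by
    rw [integral_add' (hi.add h1.1) h2.1, integral_add' hi h1.1, h1.2, h2.2,
      integral_indicator measurableSet_Icc]
    simp
    rw [max_eq_left] <;> linarith
  rw [ea]
  linarith

/-- For m ≥ 10, a ∈ [√(2 log 2)/m, 1] and λ ∈ [0,1], the geometric-mean
normalization satisfies e^{−λa²m²/2}/(10m) ≤ ∫ ν^{1−λ}π^λ ≤ 4(e^{−λa²m²/2} + e^{−λ(1−λ)m²/2});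
equivalently, 1/(4(e^{−λa²m²/2}+e^{−λ(1−λ)m²/2})) ≤ c_λ ≤ 10m·e^{λa²m²/2}. -/
theorem unimodal_tempering_normalizing_constant_bounds
    (m a : ℝ) (hm : 10 ≤ m)
    (ha : a ∈ Set.Icc (Real.sqrt (2 * Real.log 2) / m) 1)
    (lam : ℝ) (hlam : lam ∈ Set.Icc (0 : ℝ) 1) :
    Real.exp (-(lam * a ^ 2 * m ^ 2) / 2) / (10 * m)
      ≤ (∫ x, (stdGauss x) ^ (1 - lam) * (piDensA m a x) ^ lam) ∧
    (∫ x, (stdGauss x) ^ (1 - lam) * (piDensA m a x) ^ lam)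
      ≤ 4 * (Real.exp (-(lam * a ^ 2 * m ^ 2) / 2)
              + Real.exp (-(lam * (1 - lam) * m ^ 2) / 2)) := by
  obtain ⟨hl0, hl1⟩ := hlam
  have hs : 0 < Real.sqrt (2 * Real.pi) := by positivity
  have hs3 : Real.sqrt (2 * Real.pi) ≤ 3 := by
    rw [Real.sqrt_le_left (by norm_num)]
    linarith [Real.pi_lt_d2]
  have hD : 0 < 3 * m + Real.sqrt (2 * Real.pi) := by positivity
  set E := Real.exp (-(a ^ 2 * m ^ 2) / 2) with hE
  have hE0 : 0 < E := Real.exp_pos _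
  have hE1 : E ≤ 1 := Real.exp_le_one_iff.2 (by nlinarith [sq_nonneg (a * m)])
  have hEl : E ^ lam = Real.exp (-(lam * a ^ 2 * m ^ 2) / 2) := by
    rw [hE, ← Real.exp_mul]
    congr 1
    ring
  rw [← hEl]
  have hEl0 : 0 < E ^ lam := Real.rpow_pos_of_pos hE0 _
  set K := Real.exp (-(lam * (1 - lam) * m ^ 2) / 2) with hK
  have hn0 : ∀ x, 0 < stdGauss x := fun x => by unfold stdGauss; positivity
  have hg0 : ∀ x, 0 < gaussAt m x := fun x => by unfold gaussAt; positivity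
  have hu0 : ∀ x, 0 < smUnif m x := fun x => smUnif_pos m x hm
  have hpi : ∀ x, piDensA m a x = (1 - E) * gaussAt m x + E * smUnif m x := fun x => rfl
  have hpE : ∀ x, E * smUnif m x ≤ piDensA m a x := fun x => by
    rw [hpi]
    have := mul_nonneg (sub_nonneg.2 hE1) (hg0 x).le
    linarith
  have hp0 : ∀ x, 0 < piDensA m a x := fun x => (mul_pos hE0 (hu0 x)).trans_le (hpE x)
  have hnint : Integrable stdGauss ∧ ∫ x, stdGauss x = 1 := by
    have := gaussAt_aux 0
    have h0 : gaussAt 0 = stdGauss := by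
      funext x
      simp [gaussAt, stdGauss]
    rwa [h0] at this
  have hu := smUnif_aux m hm
  have hg := gaussAt_aux (lam * m)
  have hF0 : ∀ x, 0 ≤ (stdGauss x) ^ (1 - lam) * (piDensA m a x) ^ lam := fun x =>
    mul_nonneg (Real.rpow_nonneg (hn0 x).le _) (Real.rpow_nonneg (hp0 x).le _)
  have hle : ∀ x, (stdGauss x) ^ (1 - lam) * (piDensA m a x) ^ lam
      ≤ K * gaussAt (lam * m) x + E ^ lam * ((1 - lam) * stdGauss x + lam * smUnif m x) := by
    intro x
    have h1 : (piDensA m a x) ^ lam ≤ (gaussAt m x) ^ lam + E ^ lam * (smUnif m x) ^ lam := by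
      rw [← Real.mul_rpow hE0.le (hu0 x).le]
      refine le_trans (Real.rpow_le_rpow (hp0 x).le ?_ hl0)
        (Real.rpow_add_le_add_rpow (hg0 x).le (mul_pos hE0 (hu0 x)).le hl0 hl1)
      rw [hpi]
      nlinarith [mul_pos hE0 (hg0 x)]
    have h2 : (stdGauss x) ^ (1 - lam) * (smUnif m x) ^ lam
        ≤ (1 - lam) * stdGauss x + lam * smUnif m x :=
      Real.geom_mean_le_arith_mean2_weighted (by linarith) hl0 (hn0 x).le (hu0 x).le (by ring)
    have h3 := mix_aux m x lam
    rw [← hK] at h3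
    have h4 := Real.rpow_nonneg (hn0 x).le (1 - lam)
    calc _ ≤ (stdGauss x) ^ (1 - lam) * ((gaussAt m x) ^ lam + E ^ lam * (smUnif m x) ^ lam) :=
          mul_le_mul_of_nonneg_left h1 h4
      _ = K * gaussAt (lam * m) x
          + E ^ lam * ((stdGauss x) ^ (1 - lam) * (smUnif m x) ^ lam) := by rw [← h3]; ring
      _ ≤ _ := by gcongr
  have hi1 := hg.1.const_mul K
  have hi2 := hnint.1.const_mul (1 - lam)
  have hi3 := hu.1.const_mul lam
  have hi4 : Integrable (fun x => E ^ lam * ((1 - lam) * stdGauss x + lam * smUnif m x)) :=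
    (hi2.add hi3).const_mul (E ^ lam)
  have hG : Integrable (fun x => K * gaussAt (lam * m) x
      + E ^ lam * ((1 - lam) * stdGauss x + lam * smUnif m x)) := hi1.add hi4
  have hcn : Continuous stdGauss := by unfold stdGauss; fun_prop
  have hcp : Continuous (piDensA m a) := by
    have h1 := smUnif_cont m
    have h2 : Continuous (gaussAt m) := by unfold gaussAt; fun_prop
    unfold piDensA
    fun_prop
  have hF : Integrable (fun x => (stdGauss x) ^ (1 - lam) * (piDensA m a x) ^ lam) := by
    refine hG.mono' (Continuous.aestronglyMeasurable ?_) (ae_of_all _ fun x => ?_)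
    · exact (hcn.rpow_const fun x => Or.inl (hn0 x).ne').mul
        (hcp.rpow_const fun x => Or.inl (hp0 x).ne')
    · rw [Real.norm_of_nonneg (hF0 x)]
      exact hle x
  constructor
  · have hlow : ∀ x ∈ Set.Icc (-1 : ℝ) 1, E ^ lam * (1 / (3 * m + Real.sqrt (2 * Real.pi)))
        ≤ (stdGauss x) ^ (1 - lam) * (piDensA m a x) ^ lam := by
      intro x hx
      set u := 1 / (3 * m + Real.sqrt (2 * Real.pi)) with hudef
      have hup : 0 < u := by positivity
      have hux : smUnif m x = u := by
        unfold smUnif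
        rw [Metric.infDist_zero_of_mem
          (show x ∈ Set.Icc (-m) (2 * m) from ⟨by linarith [hx.1], by linarith [hx.2]⟩)]
        simp [hudef]
      have hnu : u ≤ stdGauss x := by
        unfold stdGauss
        rw [hudef, div_le_div_iff₀ hD hs]
        have hx2 : x ^ 2 ≤ 1 := by nlinarith [hx.1, hx.2]
        have := Real.add_one_le_exp (-x ^ 2 / 2)
        have h5 : (1 / 2 : ℝ) ≤ Real.exp (-x ^ 2 / 2) := by linarith
        nlinarith
      have hnu' := Real.rpow_le_rpow hup.le hnu (show 0 ≤ 1 - lam by linarith)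
      have h6 := Real.rpow_le_rpow (mul_pos hE0 (hu0 x)).le (hpE x) hl0
      rw [hux, Real.mul_rpow hE0.le hup.le] at h6
      calc E ^ lam * u = u ^ (1 - lam) * (E ^ lam * u ^ lam) := by
            have : u ^ (1 - lam) * u ^ lam = u := by
              rw [← Real.rpow_add hup]
              simp
            rw [mul_left_comm, this]
        _ ≤ _ := mul_le_mul hnu' h6 (by positivity) (Real.rpow_nonneg (hn0 x).le _)
    have h7 := setIntegral_mono_on (μ := volume)
      (integrableOn_const (by simp)) hF.integrableOn measurableSet_Icc hlow
    have h8 := setIntegral_le_integral (s := Set.Icc (-1 : ℝ) 1) hF (ae_of_all _ hF0)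
    refine le_trans ?_ (h7.trans h8)
    simp only [setIntegral_const, smul_eq_mul, Measure.real, Real.volume_Icc]
    rw [ENNReal.toReal_ofReal (by norm_num), div_eq_mul_one_div, mul_left_comm]
    apply mul_le_mul_of_nonneg_left _ hEl0.le
    rw [mul_one_div, div_le_div_iff₀ (by linarith) hD]
    linarith
  · refine (integral_mono hF hG hle).trans ?_
    have e1 : ∫ x, (K * gaussAt (lam * m) x
        + E ^ lam * ((1 - lam) * stdGauss x + lam * smUnif m x))
        = K * 1 + E ^ lam * ((1 - lam) * 1 + lam * ∫ x, smUnif m x) := by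
      rw [integral_add hi1 hi4, integral_const_mul, integral_const_mul]
      rw [integral_add hi2 hi3, integral_const_mul, integral_const_mul, hg.2, hnint.2]
    rw [e1]
    have hK0 : 0 < K := Real.exp_pos _
    have h9 : (1 - lam) * 1 + lam * ∫ x, smUnif m x ≤ 4 := by nlinarith [hu.2]
    nlinarith [mul_le_mul_of_nonneg_left h9 hEl0.le]
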